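/- arXiv:2504.00331 — 2 statements merged into one kernel-verified Lean document; each statement's English description precedes it below -/
import Mathlib

section
/- There exists an absolute constant C such that for every prime p and every odd integer α ≥ 1, one has | ∑_{u+v = 3α, u,v ≥ 0} s(p^u, p^v) − 4p^{(3α−1)/2} | ≤ C p^{(3α−3)/2}; that is, the sum of s(m₁,m₂) over all factorizations p^{3α} = m₁m₂ equals 4p^{(3α−1)/2} + O(p^{(3α−1)/2 − 1}) uniformly in p and odd α. -/
/-- `numSubgroups m₁ m₂` is the number of subgroups of the additive group
`ℤ_{m₁} × ℤ_{m₂}`. -/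
noncomputable def numSubgroups (m₁ m₂ : ℕ) : ℕ :=
  Nat.card (AddSubgroup (ZMod m₁ × ZMod m₂))

/-! By a form of Goursat's lemma, a subgroup `H` of `G × K` is the same thing as a homomorphism
`A → K ⧸ B` with `A ≤ G` and `B ≤ K`. For finite cyclic groups there is one `A` for each divisor
`d` of `|G|`, one `B` for each index `e ∣ |K|`, and `gcd (d, e)` homomorphisms, so that
`s(m, n) = ∑_{d ∣ m} ∑_{e ∣ n} gcd (d, e)`. On prime powers, removing the terms with `d = 1` or
`e = 1` gives `s(p^(a+1), p^(b+1)) = p s(p^a, p^b) + a + b + 3`. Hence the sum `T(n)` of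
`s(p^u, p^v)` over `u + v = n` satisfies `T(n + 2) = p T(n) + (n + 3)²` with `T(1) = 4`. Unrolling
this recurrence at odd `n`, the inhomogeneous terms contribute at most
`p^((n - 3) / 2) ∑_j (2 j + 4)² / 2^j`. -/

open Finset

section Goursat

variable {R M N : Type*} [Ring R] [AddCommGroup M] [Module R M] [AddCommGroup N] [Module R N]

/-- The submodule of `M × N` of all `(x, y)` with `f x = y` modulo `B`, attached to a partial
linear map `f` from `M` to `N ⧸ B`. Every submodule of `M × N` has this form in exactly one way,
which is the asymmetric form of Goursat's lemma. -/
def graphMod (x : Σ B : Submodule R N, M →ₗ.[R] N ⧸ B) : Submodule R (M × N) :=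
  x.2.graph.comap (LinearMap.id.prodMap x.1.mkQ)

lemma comap_inr_graphMod (x : Σ B : Submodule R N, M →ₗ.[R] N ⧸ B) :
    (graphMod x).comap (LinearMap.inr R M N) = x.1 := by
  obtain ⟨B, f⟩ := x
  ext y
  have hzero : (0, B.mkQ y) ∈ f.graph ↔ B.mkQ y = 0 :=
    ⟨fun h => f.graph_fst_eq_zero_snd h rfl, fun h => h ▸ f.graph.zero_mem⟩
  simpa [graphMod] using hzero

lemma graphMod_injective : Function.Injective (graphMod (R := R) (M := M) (N := N)) := by
  rintro ⟨B, f⟩ ⟨B', f'⟩ h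
  obtain rfl : B = B' := by
    simpa only [comap_inr_graphMod] using congrArg (Submodule.comap (LinearMap.inr R M N)) h
  have hsurj : Function.Surjective (LinearMap.id.prodMap B.mkQ : M × N →ₗ[R] M × (N ⧸ B)) :=
    Function.surjective_id.prodMap B.mkQ_surjective
  obtain rfl : f = f' :=
    LinearPMap.eq_of_eq_graph (Submodule.comap_injective_of_surjective hsurj h)
  rfl

lemma graphMod_surjective : Function.Surjective (graphMod (R := R) (M := M) (N := N)) := by
  intro H
  let B := H.comap (LinearMap.inr R M N)
  let π : M × N →ₗ[R] M × (N ⧸ B) := LinearMap.id.prodMap B.mkQ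
  have hker : LinearMap.ker π ≤ H := by
    rintro ⟨x, y⟩ hxy
    obtain ⟨rfl, hy⟩ : x = 0 ∧ y ∈ B := by simpa [π] using hxy
    exact hy
  have hcomap : (H.map π).comap π = H := Submodule.comap_map_eq_self hker
  have hfun : ∀ z ∈ H.map π, z.1 = 0 → z.2 = 0 := by
    rintro _ ⟨⟨x, y⟩, hxy, rfl⟩ (rfl : x = 0)
    exact (Submodule.Quotient.mk_eq_zero B).2 hxy
  refine ⟨⟨B, (H.map π).toLinearPMap⟩, ?_⟩
  rw [graphMod, Submodule.toLinearPMap_graph_eq _ hfun]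
  exact hcomap

/-- Goursat's lemma as a parametrization of the submodules of `M × N`, in the form suited to
counting them. -/
noncomputable def submoduleProdEquiv :
    Submodule R (M × N) ≃ Σ (B : Submodule R N) (A : Submodule R M), A →ₗ[R] N ⧸ B :=
  (Equiv.ofBijective graphMod ⟨graphMod_injective, graphMod_surjective⟩).symm.trans
    (Equiv.sigmaCongrRight fun _ =>
      { toFun := fun f => ⟨f.domain, f.toFun⟩
        invFun := fun f => ⟨f.1, f.2⟩ })

end Goursat

section Cyclic

variable {G K : Type*} [AddCommGroup G] [IsAddCyclic G] [AddCommGroup K] [IsAddCyclic K]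

lemma card_zmod_addMonoidHom [Finite K] (d : ℕ) : Nat.card (ZMod d →+ K) = (Nat.card K).gcd d := by
  rw [← IsAddCyclic.card_nsmulAddMonoidHom_ker K d, ← Nat.card_congr (ZMod.lift d (A := K))]
  refine Nat.card_congr ((zmultiplesHom K).symm.subtypeEquiv fun f => ?_)
  have hd : f d = d • f 1 := by rw [← map_nsmul, nsmul_one]
  simp [hd]

lemma card_addMonoidHom [Finite K] : Nat.card (G →+ K) = (Nat.card K).gcd (Nat.card G) := by
  rw [← card_zmod_addMonoidHom]
  exact Nat.card_congr (zmodAddCyclicAddEquiv ‹_›).symm.addMonoidHomCongrLeftEquiv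

lemma card_linearMap_quotient [Finite K] (A : Submodule ℤ G) (B : Submodule ℤ K) :
    Nat.card (A →ₗ[ℤ] K ⧸ B) = (Nat.card K / Nat.card B).gcd (Nat.card A) := by
  have : IsAddCyclic A := A.toAddSubgroup.isAddCyclic
  have : Finite (K ⧸ B) := .of_surjective B.mkQ B.mkQ_surjective
  have : IsAddCyclic (K ⧸ B) := isAddCyclic_of_surjective B.mkQ B.mkQ_surjective
  have hquot : Nat.card (K ⧸ B) = Nat.card K / Nat.card B :=
    (Nat.div_eq_of_eq_mul_right Nat.card_pos B.card_eq_card_quotient_mul_card).symm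
  rw [← Nat.card_congr (addMonoidHomLequivInt ℤ).toEquiv, card_addMonoidHom, hquot]

variable [Finite G]

lemma addSubgroup_eq_ker_nsmul (A : AddSubgroup G) :
    A = (nsmulAddMonoidHom (Nat.card A) : G →+ G).ker := by
  refine AddSubgroup.eq_of_le_of_card_ge (fun x hx => ?_) ?_
  · exact congrArg Subtype.val (card_nsmul_eq_zero' (x := (⟨x, hx⟩ : A)))
  · rw [IsAddCyclic.card_nsmulAddMonoidHom_ker,
      Nat.gcd_eq_right A.card_addSubgroup_dvd_card]

lemma card_addSubgroup_injective : Function.Injective fun A : AddSubgroup G => Nat.card A := by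
  intro A B (h : Nat.card A = Nat.card B)
  rw [addSubgroup_eq_ker_nsmul A, h, ← addSubgroup_eq_ker_nsmul B]

lemma sum_addSubgroup_card {S : Type*} [AddCommMonoid S] [Fintype (AddSubgroup G)] (f : ℕ → S) :
    ∑ A : AddSubgroup G, f (Nat.card A) = ∑ d ∈ (Nat.card G).divisors, f d := by
  refine sum_nbij (fun A => Nat.card A) (fun A _ => ?_) card_addSubgroup_injective.injOn
    (fun d hd => ?_) fun _ _ => rfl
  · exact Nat.mem_divisors.2 ⟨A.card_addSubgroup_dvd_card, Nat.card_pos.ne'⟩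
  · refine ⟨(nsmulAddMonoidHom d : G →+ G).ker, mem_coe.2 (mem_univ _), ?_⟩
    exact (IsAddCyclic.card_nsmulAddMonoidHom_ker G d).trans
      (Nat.gcd_eq_right (Nat.dvd_of_mem_divisors hd))

lemma sum_intSubmodule_card {S : Type*} [AddCommMonoid S] [Fintype (Submodule ℤ G)] (f : ℕ → S) :
    ∑ A : Submodule ℤ G, f (Nat.card A) = ∑ d ∈ (Nat.card G).divisors, f d := by
  have : Fintype (AddSubgroup G) := Fintype.ofFinite _
  rw [← sum_addSubgroup_card]
  exact (AddSubgroup.toIntSubmodule.toEquiv.sum_comp fun A => f (Nat.card A)).symm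

theorem card_addSubgroup_prod [Finite K] : Nat.card (AddSubgroup (G × K)) =
    ∑ d ∈ (Nat.card G).divisors, ∑ e ∈ (Nat.card K).divisors, d.gcd e := by
  have : Fintype (Submodule ℤ G) := Fintype.ofFinite _
  have : Fintype (Submodule ℤ K) := Fintype.ofFinite _
  have (B : Submodule ℤ K) : Finite (K ⧸ B) := .of_surjective B.mkQ B.mkQ_surjective
  have (A : Submodule ℤ G) (B : Submodule ℤ K) : Finite (A →ₗ[ℤ] K ⧸ B) := DFunLike.finite _
  have hinner (B : Submodule ℤ K) : ∑ A : Submodule ℤ G, Nat.card (A →ₗ[ℤ] K ⧸ B) =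
      ∑ d ∈ (Nat.card G).divisors, (Nat.card K / Nat.card B).gcd d := by
    simp only [card_linearMap_quotient]
    exact sum_intSubmodule_card fun d => (Nat.card K / Nat.card B).gcd d
  calc Nat.card (AddSubgroup (G × K))
      = ∑ B : Submodule ℤ K, ∑ A : Submodule ℤ G, Nat.card (A →ₗ[ℤ] K ⧸ B) := by
        rw [Nat.card_congr (AddSubgroup.toIntSubmodule.toEquiv.trans submoduleProdEquiv)]
        simp only [Nat.card_sigma]
    _ = ∑ e ∈ (Nat.card K).divisors, ∑ d ∈ (Nat.card G).divisors, (Nat.card K / e).gcd d := by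
        simp only [hinner]
        exact sum_intSubmodule_card fun e => ∑ d ∈ (Nat.card G).divisors, (Nat.card K / e).gcd d
    _ = ∑ d ∈ (Nat.card G).divisors, ∑ e ∈ (Nat.card K).divisors, d.gcd e := by
        rw [Nat.sum_div_divisors (Nat.card K) fun e => ∑ d ∈ (Nat.card G).divisors, e.gcd d,
          sum_comm]
        simp only [Nat.gcd_comm]

end Cyclic

theorem numSubgroups_eq_sum_gcd (m n : ℕ) [NeZero m] [NeZero n] :
    numSubgroups m n = ∑ d ∈ m.divisors, ∑ e ∈ n.divisors, d.gcd e := by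
  rw [numSubgroups, card_addSubgroup_prod, Nat.card_zmod, Nat.card_zmod]

section PrimePow

variable {p : ℕ}

lemma gcd_pow_pow (p i j : ℕ) : (p ^ i).gcd (p ^ j) = p ^ min i j := by
  rcases le_total i j with h | h
  · rw [min_eq_left h, Nat.gcd_eq_left (pow_dvd_pow p h)]
  · rw [min_eq_right h, Nat.gcd_eq_right (pow_dvd_pow p h)]

lemma numSubgroups_prime_pow (hp : p.Prime) (a b : ℕ) :
    numSubgroups (p ^ a) (p ^ b) = ∑ i ∈ range (a + 1), ∑ j ∈ range (b + 1), p ^ min i j := by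
  have : NeZero p := ⟨hp.ne_zero⟩
  simp only [numSubgroups_eq_sum_gcd, Nat.sum_divisors_prime_pow hp, gcd_pow_pow]

lemma numSubgroups_one_prime_pow (hp : p.Prime) (b : ℕ) : numSubgroups 1 (p ^ b) = b + 1 := by
  simpa using numSubgroups_prime_pow hp 0 b

lemma numSubgroups_prime_pow_one (hp : p.Prime) (a : ℕ) : numSubgroups (p ^ a) 1 = a + 1 := by
  simpa using numSubgroups_prime_pow hp a 0

lemma numSubgroups_prime_pow_succ (hp : p.Prime) (a b : ℕ) :
    numSubgroups (p ^ (a + 1)) (p ^ (b + 1)) =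
      p * numSubgroups (p ^ a) (p ^ b) + (a + b + 3) := by
  have hrow (i : ℕ) : ∑ j ∈ range (b + 2), p ^ min (i + 1) j =
      p * ∑ j ∈ range (b + 1), p ^ min i j + 1 := by
    simp [sum_range_succ' _ (b + 1), mul_sum, pow_succ']
  rw [numSubgroups_prime_pow hp, numSubgroups_prime_pow hp, sum_range_succ']
  simp only [hrow, sum_add_distrib, ← mul_sum]
  simp only [zero_le, min_eq_left, pow_zero, sum_const, card_range, smul_eq_mul]
  ring

/-- The sum of the numbers of subgroups of `ℤ_{m₁} × ℤ_{m₂}` over all factorizations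
`p ^ n = m₁ m₂`, for a prime `p`; the factorizations are encoded by the pairs of exponents. -/
noncomputable def sumNumSubgroups (p n : ℕ) : ℕ :=
  ∑ x ∈ antidiagonal n, numSubgroups (p ^ x.1) (p ^ x.2)

lemma sumNumSubgroups_one (hp : p.Prime) : sumNumSubgroups p 1 = 4 := by
  have h₁ := numSubgroups_one_prime_pow hp 1
  have h₂ := numSubgroups_prime_pow_one hp 1
  rw [pow_one] at h₁ h₂
  simp [sumNumSubgroups, Nat.antidiagonal_succ, h₁, h₂]

lemma sumNumSubgroups_add_two (hp : p.Prime) (n : ℕ) :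
    sumNumSubgroups p (n + 2) = p * sumNumSubgroups p n + (n + 3) ^ 2 := by
  have hinner : ∑ x ∈ antidiagonal n, numSubgroups (p ^ (x.1 + 1)) (p ^ (x.2 + 1)) =
      p * sumNumSubgroups p n + (n + 1) * (n + 3) := by
    rw [sumNumSubgroups, mul_sum, ← Nat.card_antidiagonal n, ← smul_eq_mul (#_), ← sum_const,
      ← sum_add_distrib]
    refine sum_congr rfl fun x hx => ?_
    rw [numSubgroups_prime_pow_succ hp, mem_antidiagonal.1 hx]
  rw [sumNumSubgroups, Nat.antidiagonal_succ_succ']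
  simp only [sum_cons, sum_map, Function.Embedding.prodMap, Function.Embedding.coeFn_mk,
    Prod.map, Nat.succ_eq_add_one, hinner, pow_zero,
    numSubgroups_one_prime_pow hp, numSubgroups_prime_pow_one hp]
  ring

lemma le_sumNumSubgroups_odd (hp : p.Prime) (k : ℕ) :
    4 * p ^ k ≤ sumNumSubgroups p (2 * k + 1) := by
  induction k with
  | zero => simp [sumNumSubgroups_one hp]
  | succ k ih =>
    calc 4 * p ^ (k + 1) = p * (4 * p ^ k) := by ring
      _ ≤ p * sumNumSubgroups p (2 * k + 1) := Nat.mul_le_mul_left p ih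
      _ ≤ sumNumSubgroups p (2 * k + 1 + 2) := by
        rw [sumNumSubgroups_add_two hp]
        exact Nat.le_add_right _ _

-- `q k = 4 k ^ 2 + 32 k + 72` is the polynomial with `2 * q k = q (k + 1) + (2 k + 6) ^ 2`; it
-- absorbs the inhomogeneous term of the recurrence, and `88 = q 0 + 16`.
lemma sumNumSubgroups_odd_add_le (hp : p.Prime) (k : ℕ) :
    sumNumSubgroups p (2 * k + 3) + (4 * k ^ 2 + 32 * k + 72) ≤ 4 * p ^ (k + 1) + 88 * p ^ k := by
  induction k with
  | zero =>
    refine le_of_eq ?_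
    rw [mul_zero, zero_add, sumNumSubgroups_add_two hp 1, sumNumSubgroups_one hp]
    ring
  | succ k ih =>
    calc sumNumSubgroups p (2 * k + 3 + 2) + (4 * (k + 1) ^ 2 + 32 * (k + 1) + 72)
        = p * sumNumSubgroups p (2 * k + 3) + 2 * (4 * k ^ 2 + 32 * k + 72) := by
          rw [sumNumSubgroups_add_two hp]; ring
      _ ≤ p * sumNumSubgroups p (2 * k + 3) + p * (4 * k ^ 2 + 32 * k + 72) := by
          gcongr
          exact hp.two_le
      _ ≤ p * (4 * p ^ (k + 1) + 88 * p ^ k) := by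
          rw [← mul_add]
          exact Nat.mul_le_mul_left p ih
      _ = 4 * p ^ (k + 1 + 1) + 88 * p ^ (k + 1) := by ring

lemma abs_sumNumSubgroups_odd_sub_le (hp : p.Prime) (k : ℕ) :
    |(sumNumSubgroups p (2 * k + 3) : ℝ) - 4 * (p : ℝ) ^ (k + 1)| ≤ 88 * (p : ℝ) ^ k := by
  have hlower : 4 * (p : ℝ) ^ (k + 1) ≤ sumNumSubgroups p (2 * k + 3) :=
    mod_cast le_sumNumSubgroups_odd hp (k + 1)
  have hupper : (sumNumSubgroups p (2 * k + 3) : ℝ) ≤ 4 * (p : ℝ) ^ (k + 1) + 88 * (p : ℝ) ^ k :=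
    mod_cast (Nat.le_add_right _ _).trans (sumNumSubgroups_odd_add_le hp k)
  rw [abs_of_nonneg (sub_nonneg.2 hlower)]
  linarith

end PrimePow

theorem stmt12_general : ∃ C : ℝ, ∀ p : ℕ, p.Prime → ∀ n : ℕ, 3 ≤ n → Odd n →
    |(∑ u ∈ range (n + 1), (numSubgroups (p ^ u) (p ^ (n - u)) : ℝ))
        - 4 * (p : ℝ) ^ ((n - 1) / 2)|
      ≤ C * (p : ℝ) ^ ((n - 3) / 2) := by
  refine ⟨88, fun p hp n hn hodd => ?_⟩
  obtain ⟨k, rfl⟩ : ∃ k, n = 2 * k + 3 := by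
    obtain ⟨m, rfl⟩ := hodd
    exact ⟨m - 1, by lia⟩
  have hsum : ∑ u ∈ range (2 * k + 3 + 1), (numSubgroups (p ^ u) (p ^ (2 * k + 3 - u)) : ℝ) =
      sumNumSubgroups p (2 * k + 3) := by
    rw [sumNumSubgroups, Nat.sum_antidiagonal_eq_sum_range_succ_mk, Nat.cast_sum]
  have hmain : (2 * k + 3 - 1) / 2 = k + 1 := by lia
  have herror : (2 * k + 3 - 3) / 2 = k := by lia
  rw [hsum, hmain, herror]
  exact abs_sumNumSubgroups_odd_sub_le hp k

theorem stmt12 : ∃ C : ℝ, ∀ p : ℕ, p.Prime → ∀ α : ℕ, 1 ≤ α → Odd α →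
    |(∑ u ∈ Finset.range (3 * α + 1),
        (numSubgroups (p ^ u) (p ^ (3 * α - u)) : ℝ)) - 4 * (p : ℝ) ^ ((3 * α - 1) / 2)|
      ≤ C * (p : ℝ) ^ ((3 * α - 3) / 2) := by
  obtain ⟨C, hC⟩ := stmt12_general
  exact ⟨C, fun p hp α hα hodd => hC p hp (3 * α) (by lia) (Odd.mul (by decide) hodd)⟩
end

section
/- For all positive integers m₁ and m₂, the number of subgroups of ℤ_{m₁} × ℤ_{m₂} satisfies s(m₁,m₂) ≤ gcd(m₁,m₂) · τ(m₁) · τ(m₂), where τ(n) is the number of divisors of n. -/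
/-!
A subgroup `H ≤ A × B` is determined by its projection `P ≤ A`, its vertical fibre
`N = {b | (0, b) ∈ H}`, and the homomorphism `P → B ⧸ N` sending `a` to the coset of all `b` with
`(a, b) ∈ H`; conversely every such triple comes from a subgroup. When `A` and `B` are finite
cyclic, of orders `m` and `n`, there is one `P` for each order `a ∣ m`, one `N` for each index
`b ∣ n`, and `gcd a b` homomorphisms between the resulting cyclic groups. Hence there are
`∑ gcd a b` subgroups, and each of the `τ(m) τ(n)` terms is at most `gcd m n`.
-/

section CosetGraph

variable {A B : Type*} [AddGroup A] [AddCommGroup B] {P : AddSubgroup A} {N : AddSubgroup B}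

/-- The graph of a homomorphism `φ : P →+ B ⧸ N`, seen as a multivalued map from `A` to `B`: the
subgroup of all pairs `(a, b)` with `a ∈ P` and `b` in the coset `φ a`. Every subgroup of `A × B`
is of this form. -/
def cosetGraph (φ : P →+ B ⧸ N) : AddSubgroup (A × B) :=
  (φ.graph.comap ((AddMonoidHom.id P).prodMap (QuotientAddGroup.mk' N))).map
    (P.subtype.prodMap (AddMonoidHom.id B))

theorem mem_cosetGraph {φ : P →+ B ⧸ N} {p : A × B} :
    p ∈ cosetGraph φ ↔ ∃ h : p.1 ∈ P, φ ⟨p.1, h⟩ = p.2 := by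
  obtain ⟨a, b⟩ := p
  simp [cosetGraph, AddMonoidHom.mem_graph]

theorem map_fst_cosetGraph (φ : P →+ B ⧸ N) :
    (cosetGraph φ).map (AddMonoidHom.fst A B) = P := by
  ext a
  constructor
  · rintro ⟨p, hp, rfl⟩
    exact (mem_cosetGraph.1 hp).1
  · intro ha
    obtain ⟨b, hb⟩ := QuotientAddGroup.mk_surjective (φ ⟨a, ha⟩)
    exact ⟨(a, b), mem_cosetGraph.2 ⟨ha, hb.symm⟩, rfl⟩

theorem comap_inr_cosetGraph (φ : P →+ B ⧸ N) :
    (cosetGraph φ).comap (AddMonoidHom.inr A B) = N := by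
  ext b
  have map_zero_mk (h : (0 : A) ∈ P) : φ ⟨0, h⟩ = 0 := map_zero φ
  simp [mem_cosetGraph, map_zero_mk, eq_comm (a := (0 : B ⧸ N))]

theorem cosetGraph_injective :
    Function.Injective (cosetGraph : (P →+ B ⧸ N) → AddSubgroup (A × B)) := by
  intro φ ψ h
  ext ⟨a, ha⟩
  obtain ⟨b, hb⟩ := QuotientAddGroup.mk_surjective (φ ⟨a, ha⟩)
  have hab : (a, b) ∈ cosetGraph ψ := h ▸ mem_cosetGraph.2 ⟨ha, hb.symm⟩
  obtain ⟨_, hψ⟩ := mem_cosetGraph.1 hab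
  exact hb.symm.trans hψ.symm

theorem exists_cosetGraph_eq (H : AddSubgroup (A × B)) :
    ∃ φ : H.map (AddMonoidHom.fst A B) →+ B ⧸ H.comap (AddMonoidHom.inr A B),
      cosetGraph φ = H := by
  set N := H.comap (AddMonoidHom.inr A B)
  let f : H →+ H.map (AddMonoidHom.fst A B) × (B ⧸ N) :=
    ((AddMonoidHom.fst A B).addSubgroupMap H).prod
      ((QuotientAddGroup.mk' N).comp ((AddMonoidHom.snd A B).comp H.subtype))
  obtain ⟨φ, hφ⟩ : ∃ φ : H.map (AddMonoidHom.fst A B) →+ B ⧸ N, f.range = φ.graph := by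
    refine f.exists_range_eq_graph ((AddMonoidHom.fst A B).addSubgroupMap_surjective H) ?_
    rintro ⟨⟨a, b⟩, hb⟩ ⟨⟨a', c⟩, hc⟩ h
    obtain rfl : a = a' := congrArg Subtype.val h
    have hbc : b - c ∈ N := by simpa [N] using H.sub_mem hb hc
    exact QuotientAddGroup.eq_iff_sub_mem.2 hbc
  have map_eq {a : A} {b : B} (h : (a, b) ∈ H) : φ ⟨a, ⟨(a, b), h, rfl⟩⟩ = b :=
    AddMonoidHom.mem_graph.1 (hφ.le ⟨⟨(a, b), h⟩, rfl⟩)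
  refine ⟨φ, AddSubgroup.ext fun ⟨a, b⟩ => mem_cosetGraph.trans ⟨?_, fun h => ⟨_, map_eq h⟩⟩⟩
  rintro ⟨⟨⟨a', c⟩, hac, ha⟩, hb⟩
  obtain rfl : a' = a := ha
  have hbc : (0, b - c) ∈ H := QuotientAddGroup.eq_iff_sub_mem.1 (hb.symm.trans (map_eq hac))
  simpa using H.add_mem hbc hac

theorem cosetGraph_bijective :
    Function.Bijective
      (fun t : Σ (P : AddSubgroup A) (N : AddSubgroup B), P →+ B ⧸ N => cosetGraph t.2.2) := by
  refine ⟨?_, fun H => (exists_cosetGraph_eq H).imp' (fun φ => ⟨_, _, φ⟩) fun _ => id⟩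
  rintro ⟨P, N, φ⟩ ⟨P', N', ψ⟩ (h : cosetGraph φ = cosetGraph ψ)
  obtain rfl : P = P' := by rw [← map_fst_cosetGraph φ, h, map_fst_cosetGraph]
  obtain rfl : N = N' := by rw [← comap_inr_cosetGraph φ, h, comap_inr_cosetGraph]
  rw [cosetGraph_injective h]

theorem card_addSubgroup_prod_s14 [Finite A] [Finite B]
    [Fintype (AddSubgroup A)] [Fintype (AddSubgroup B)] :
    Nat.card (AddSubgroup (A × B)) =
      ∑ P : AddSubgroup A, ∑ N : AddSubgroup B, Nat.card (P →+ B ⧸ N) := by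
  have finite_hom (P : AddSubgroup A) (N : AddSubgroup B) : Finite (P →+ B ⧸ N) :=
    DFunLike.finite _
  simp_rw [← Nat.card_eq_of_bijective _ cosetGraph_bijective, Nat.card_sigma]

end CosetGraph

section Cyclic

theorem card_addMonoidHom_eq_card_ker_nsmul (C D : Type*) [AddGroup C] [IsAddCyclic C]
    [AddCommGroup D] :
    Nat.card (C →+ D) = Nat.card (nsmulAddMonoidHom (Nat.card C) : D →+ D).ker := by
  obtain ⟨g, hg⟩ := IsAddCyclic.exists_generator (α := C)
  have hg_card : addOrderOf g = Nat.card C := addOrderOf_eq_card_of_forall_mem_zmultiples hg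
  refine Nat.card_eq_of_bijective (fun φ => ⟨φ g, ?_⟩) ⟨fun φ ψ h => ?_, fun ⟨x, hx⟩ => ?_⟩
  · rw [AddMonoidHom.mem_ker, nsmulAddMonoidHom_apply, ← map_nsmul, ← hg_card,
      addOrderOf_nsmul_eq_zero, map_zero]
  · exact (AddMonoidHom.eq_iff_eq_on_generator hg φ ψ).2 (congrArg Subtype.val h)
  · have hx_dvd : addOrderOf x ∣ addOrderOf g :=
      hg_card ▸ addOrderOf_dvd_of_nsmul_eq_zero hx
    exact ⟨addMonoidHomOfForallMemZMultiples hg hx_dvd,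
      Subtype.ext (addMonoidHomOfForallMemZMultiples_apply_gen hg hx_dvd)⟩

theorem card_addMonoidHom_of_isAddCyclic (C D : Type*) [AddGroup C] [IsAddCyclic C]
    [AddCommGroup D] [IsAddCyclic D] [Finite D] :
    Nat.card (C →+ D) = (Nat.card C).gcd (Nat.card D) := by
  rw [card_addMonoidHom_eq_card_ker_nsmul, IsAddCyclic.card_nsmulAddMonoidHom_ker, Nat.gcd_comm]

variable {G : Type*} [AddCommGroup G] [IsAddCyclic G] [Finite G]

theorem eq_ker_nsmul_card (H : AddSubgroup G) :
    H = (nsmulAddMonoidHom (Nat.card H) : G →+ G).ker := by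
  refine AddSubgroup.eq_of_le_of_card_ge (fun x hx => ?_) (le_of_eq ?_)
  · exact congrArg Subtype.val (card_nsmul_eq_zero' (x := (⟨x, hx⟩ : H)))
  · rw [IsAddCyclic.card_nsmulAddMonoidHom_ker,
      Nat.gcd_eq_right (AddSubgroup.card_addSubgroup_dvd_card H)]

theorem bijOn_card_addSubgroup_divisors :
    Set.BijOn (fun H : AddSubgroup G => Nat.card H) Set.univ (Nat.card G).divisors := by
  refine ⟨fun H _ => ?_, fun H _ K _ (h : Nat.card H = Nat.card K) => ?_, fun d hd => ?_⟩
  · exact Nat.mem_divisors.2 ⟨AddSubgroup.card_addSubgroup_dvd_card H, Nat.card_pos.ne'⟩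
  · rw [eq_ker_nsmul_card H, h, ← eq_ker_nsmul_card K]
  · refine ⟨(nsmulAddMonoidHom d : G →+ G).ker, Set.mem_univ _, ?_⟩
    exact (IsAddCyclic.card_nsmulAddMonoidHom_ker G d).trans
      (Nat.gcd_eq_right (Nat.dvd_of_mem_divisors hd))

theorem sum_card_addSubgroup [Fintype (AddSubgroup G)] {M : Type*} [AddCommMonoid M] (f : ℕ → M) :
    ∑ H : AddSubgroup G, f (Nat.card H) = ∑ d ∈ (Nat.card G).divisors, f d := by
  have h := bijOn_card_addSubgroup_divisors (G := G)
  exact Finset.sum_nbij (fun H => Nat.card H) (fun H _ => h.mapsTo (Set.mem_univ H))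
    (by simpa using h.injOn) (by simpa using h.surjOn) fun _ _ => rfl

theorem sum_index_addSubgroup [Fintype (AddSubgroup G)] {M : Type*} [AddCommMonoid M] (f : ℕ → M) :
    ∑ H : AddSubgroup G, f H.index = ∑ d ∈ (Nat.card G).divisors, f d := by
  have index_eq (H : AddSubgroup G) : H.index = Nat.card G / Nat.card H :=
    (Nat.div_eq_of_eq_mul_left Nat.card_pos H.index_mul_card.symm).symm
  simp_rw [index_eq, ← Nat.sum_div_divisors (Nat.card G) f]
  exact sum_card_addSubgroup fun d => f (Nat.card G / d)

end Cyclic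

theorem card_addSubgroup_prod_of_isAddCyclic (A B : Type*) [AddCommGroup A] [AddCommGroup B]
    [IsAddCyclic A] [IsAddCyclic B] [Finite A] [Finite B] :
    Nat.card (AddSubgroup (A × B)) =
      ∑ a ∈ (Nat.card A).divisors, ∑ b ∈ (Nat.card B).divisors, a.gcd b := by
  have := Fintype.ofFinite (AddSubgroup A)
  have := Fintype.ofFinite (AddSubgroup B)
  have isAddCyclic_quotient (N : AddSubgroup B) : IsAddCyclic (B ⧸ N) :=
    isAddCyclic_of_surjective _ (QuotientAddGroup.mk'_surjective N)
  calc Nat.card (AddSubgroup (A × B))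
      = ∑ P : AddSubgroup A, ∑ N : AddSubgroup B, Nat.card (P →+ B ⧸ N) := card_addSubgroup_prod_s14
    _ = ∑ P : AddSubgroup A, ∑ N : AddSubgroup B, (Nat.card P).gcd N.index := by
      simp_rw [card_addMonoidHom_of_isAddCyclic, AddSubgroup.index_eq_card]
    _ = ∑ a ∈ (Nat.card A).divisors, ∑ b ∈ (Nat.card B).divisors, a.gcd b := by
      simp_rw [sum_index_addSubgroup]
      exact sum_card_addSubgroup fun a => ∑ b ∈ (Nat.card B).divisors, a.gcd b

theorem stmt14_general (A B : Type*) [AddCommGroup A] [AddCommGroup B]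
    [IsAddCyclic A] [IsAddCyclic B] [Finite A] [Finite B] :
    Nat.card (AddSubgroup (A × B)) ≤
      (Nat.card A).gcd (Nat.card B) * (Nat.card A).divisors.card * (Nat.card B).divisors.card := by
  have gcd_le {a b : ℕ} (ha : a ∈ (Nat.card A).divisors) (hb : b ∈ (Nat.card B).divisors) :
      a.gcd b ≤ (Nat.card A).gcd (Nat.card B) :=
    Nat.le_of_dvd (Nat.gcd_pos_of_pos_left _ Nat.card_pos)
      (gcd_dvd_gcd (Nat.dvd_of_mem_divisors ha) (Nat.dvd_of_mem_divisors hb))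
  calc Nat.card (AddSubgroup (A × B))
      = ∑ a ∈ (Nat.card A).divisors, ∑ b ∈ (Nat.card B).divisors, a.gcd b :=
        card_addSubgroup_prod_of_isAddCyclic A B
    _ ≤ ∑ _a ∈ (Nat.card A).divisors, ∑ _b ∈ (Nat.card B).divisors,
          (Nat.card A).gcd (Nat.card B) :=
        Finset.sum_le_sum fun _ ha => Finset.sum_le_sum fun _ hb => gcd_le ha hb
    _ = (Nat.card A).gcd (Nat.card B) * (Nat.card A).divisors.card *
          (Nat.card B).divisors.card := by
        simp only [Finset.sum_const, smul_eq_mul]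
        ring

theorem stmt14 (m₁ m₂ : ℕ) (h₁ : 0 < m₁) (h₂ : 0 < m₂) :
    numSubgroups m₁ m₂ ≤ Nat.gcd m₁ m₂ * m₁.divisors.card * m₂.divisors.card := by
  have : NeZero m₁ := ⟨h₁.ne'⟩
  have : NeZero m₂ := ⟨h₂.ne'⟩
  simpa only [numSubgroups, Nat.card_zmod] using stmt14_general (ZMod m₁) (ZMod m₂)
end
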